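/- For every bin assignment b there exists a layout Λ compatible with b achieving the minimum total crossing number over all compatible layouts such that, for every element k with 1 ≤ k < n, the number of unordered pairs of curves that cross between elements k and k+1 is at most the number of ordered pairs (x,y) of distinct curves with b(x,k) ≤ b(y,k) and b(x,k+1) > b(y,k+1). (This justifies the upper-bound weight w used in the TSP-based element ordering.) -/

import Mathlib

open Finset

/-- `Compatible b L` : the layout `L` respects the bin assignment `b`. -/
def Compatible {m n : ℕ} (b : Fin m → Fin n → ℕ) (L : Fin n → Equiv.Perm (Fin m)) : Prop :=
  ∀ i j : Fin m, ∀ k : Fin n, b i k < b j k → L k i < L k j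

/-- Curves `i` and `j` cross between elements `k` and `k+1`. -/
def CrossAt {m n : ℕ} (L : Fin n → Equiv.Perm (Fin m)) (i j : Fin m) (k : Fin n) : Prop :=
  ∃ h : (k : ℕ) + 1 < n,
    (L k i < L k j ∧ L ⟨(k : ℕ) + 1, h⟩ j < L ⟨(k : ℕ) + 1, h⟩ i) ∨
    (L k j < L k i ∧ L ⟨(k : ℕ) + 1, h⟩ i < L ⟨(k : ℕ) + 1, h⟩ j)

instance {m n : ℕ} (L : Fin n → Equiv.Perm (Fin m)) (i j : Fin m) :
    DecidablePred (CrossAt L i j) := fun k => by unfold CrossAt; infer_instance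

/-- Number of crossings of curves `i` and `j` in layout `L`. -/
def crossCount {m n : ℕ} (L : Fin n → Equiv.Perm (Fin m)) (i j : Fin m) : ℕ :=
  (univ.filter (CrossAt L i j)).card

/-- Alternation pairs of curves `i` and `j` under bin assignment `b`. -/
def AltPair {m n : ℕ} (b : Fin m → Fin n → ℕ) (i j : Fin m) (p : Fin n × Fin n) : Prop :=
  p.1 < p.2 ∧ (∀ t : Fin n, p.1 < t → t < p.2 → b i t = b j t) ∧
    ((b i p.1 < b j p.1 ∧ b j p.2 < b i p.2) ∨ (b j p.1 < b i p.1 ∧ b i p.2 < b j p.2))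

instance {m n : ℕ} (b : Fin m → Fin n → ℕ) (i j : Fin m) :
    DecidablePred (AltPair b i j) := fun p => by unfold AltPair; infer_instance

/-- Alternation number of curves `i` and `j`. -/
def altCount {m n : ℕ} (b : Fin m → Fin n → ℕ) (i j : Fin m) : ℕ :=
  (univ.filter (AltPair b i j)).card

/-- Total crossing number of layout `L` (sum over unordered pairs of curves). -/
def totalCross {m n : ℕ} (L : Fin n → Equiv.Perm (Fin m)) : ℕ :=
  ∑ p ∈ univ.filter (fun p : Fin m × Fin m => p.1 < p.2), crossCount L p.1 p.2

/-- Total wiggle of layout `L`. -/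
def totalWiggle {m n : ℕ} (L : Fin n → Equiv.Perm (Fin m)) : ℤ :=
  ∑ k : Fin n, ∑ i : Fin m,
    if h : (k : ℕ) + 1 < n then
      |((L ⟨(k : ℕ) + 1, h⟩ i : ℕ) : ℤ) - ((L k i : ℕ) : ℤ)| else 0

/-!
Both halves of optimality hold for each pair of curves `i`, `j` separately. An alternation
`(s, t)` forces every compatible layout to cross `i` and `j` somewhere in `[s, t)`, and these
intervals are disjoint for different alternations. Conversely, place `i` and `j` at element `k`
in the order of the last element `≤ k` at which their bins differ or, if there is none, of the
first later element at which they differ. In this layout the curves swap between `k` and `k + 1`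
only if `k + 1` ends an alternation, so the lower bound is attained for all pairs simultaneously.
The swap is then forced by strictly separated bins at `k + 1`, which is the gapwise bound.
-/

theorem exists_covBy_of_not {κ : Type*} [PartialOrder κ] [LocallyFiniteOrder κ] {P : κ → Prop}
    {s t : κ} (hst : s ≤ t) (hs : P s) (ht : ¬P t) :
    ∃ k k', k ⋖ k' ∧ s ≤ k ∧ k' ≤ t ∧ P k ∧ ¬P k' := by
  induction le_iff_reflTransGen_covBy.1 hst with
  | refl => exact absurd hs ht
  | @tail u v hsu huv ih =>
    by_cases hu : P u
    · exact ⟨u, v, huv, le_iff_reflTransGen_covBy.2 hsu, le_rfl, hu, ht⟩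
    · obtain ⟨k, k', hkk', hsk, hk'u, hk, hk'⟩ := ih (le_iff_reflTransGen_covBy.2 hsu) hu
      exact ⟨k, k', hkk', hsk, hk'u.trans huv.le, hk, hk'⟩

theorem card_filter_lt_and_le_card_filter {ι : Type*} [Fintype ι] [LinearOrder ι]
    {P Q : ι × ι → Prop} [DecidablePred P] [DecidablePred Q]
    (hPQ : ∀ p, p.1 < p.2 → P p → Q p ∨ Q p.swap) :
    #{p : ι × ι | p.1 < p.2 ∧ P p} ≤ #{p | Q p} := by
  refine card_le_card_of_surjOn (fun p => (min p.1 p.2, max p.1 p.2)) fun p hp => ?_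
  obtain ⟨hlt, hP⟩ : p.1 < p.2 ∧ P p := by simpa using hp
  rcases hPQ p hlt hP with hQ | hQ
  · exact ⟨p, by simpa using hQ, by simp [hlt.le]⟩
  · exact ⟨p.swap, by simpa using hQ, by simp [hlt.le]⟩

theorem sort_symm_lt_sort_symm_iff {m : ℕ} {α : Type*} [LinearOrder α] {f : Fin m → α}
    (hf : Function.Injective f) {i j : Fin m} :
    (Tuple.sort f).symm i < (Tuple.sort f).symm j ↔ f i < f j := by
  have hmono : StrictMono (f ∘ Tuple.sort f) :=
    (Tuple.monotone_sort f).strictMono_of_injective (hf.comp (Tuple.sort f).injective)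
  simpa using (hmono.lt_iff_lt (a := (Tuple.sort f).symm i) (b := (Tuple.sort f).symm j)).symm

section LayoutKey

variable {ι κ α : Type*} {b : ι → κ → α} {i j : ι} {k k' : κ}

/-- The sorting key of curve `i` at element `k`: bins up to `k`, read backwards from `k`, then all
bins read forwards, then the curve itself to make keys distinct. When the first components agree,
the second comparison is decided after `k`. -/
def layoutKey [Preorder κ] (b : ι → κ → α) (k : κ) (i : ι) :
    Colex (Set.Iic k → α) ×ₗ Lex (κ → α) ×ₗ ι :=
  toLex (toColex fun t => b i t, toLex (toLex (b i), i))

theorem layoutKey_injective [Preorder κ] (b : ι → κ → α) (k : κ) :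
    Function.Injective (layoutKey b k) :=
  fun _ _ h => congrArg (fun x => (ofLex (ofLex x).2).2) h

variable [PartialOrder ι] [LinearOrder κ] [PartialOrder α]

theorem layoutKey_lt_iff :
    layoutKey b k i < layoutKey b k j ↔
      (∃ t ≤ k, b i t < b j t ∧ ∀ u, t < u → u ≤ k → b i u = b j u) ∨
        (∀ u ≤ k, b i u = b j u) ∧ toLex (toLex (b i), i) < toLex (toLex (b j), j) := by
  have colex_lt_iff : toColex (fun t : Set.Iic k => b i t) < toColex (fun t : Set.Iic k => b j t) ↔
      ∃ t ≤ k, b i t < b j t ∧ ∀ u, t < u → u ≤ k → b i u = b j u :=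
    ⟨fun ⟨t, heq, hlt⟩ => ⟨t, t.2, hlt, fun u htu huk => heq ⟨u, huk⟩ htu⟩,
      fun ⟨t, htk, hlt, heq⟩ => ⟨⟨t, htk⟩, fun u htu => heq u htu u.2, hlt⟩⟩
  simp only [layoutKey, Prod.Lex.toLex_lt_toLex (α := Colex (Set.Iic k → α)), colex_lt_iff,
    toColex_inj, funext_iff, Subtype.forall, Set.mem_Iic]

theorem layoutKey_lt_of_lt (h : b i k < b j k) : layoutKey b k i < layoutKey b k j :=
  layoutKey_lt_iff.2 <| .inl ⟨k, le_rfl, h, fun _ hku huk => absurd huk hku.not_ge⟩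

theorem layoutKey_lt_or_lt_of_covBy (hkk' : k ⋖ k') (h : layoutKey b k' i < layoutKey b k' j) :
    b i k' < b j k' ∨ layoutKey b k i < layoutKey b k j := by
  rcases layoutKey_lt_iff.1 h with ⟨t, htk', hlt, heq⟩ | ⟨heq, hlt⟩
  · rcases htk'.eq_or_lt with rfl | htk'
    · exact .inl hlt
    · exact .inr <| layoutKey_lt_iff.2 <| .inl
        ⟨t, hkk'.le_of_lt htk', hlt, fun u htu huk => heq u htu (huk.trans hkk'.le)⟩
  · exact .inr <| layoutKey_lt_iff.2 <| .inr ⟨fun u huk => heq u (huk.trans hkk'.le), hlt⟩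

theorem lt_of_layoutKey_swap (hkk' : k ⋖ k') (h : layoutKey b k i < layoutKey b k j)
    (h' : layoutKey b k' j < layoutKey b k' i) : b j k' < b i k' :=
  (layoutKey_lt_or_lt_of_covBy hkk' h').resolve_right h.not_gt

theorem exists_last_lt_of_layoutKey_lt (hkk' : k ⋖ k') (h : layoutKey b k i < layoutKey b k j)
    (hlt' : b j k' < b i k') :
    ∃ t ≤ k, b i t < b j t ∧ ∀ u, t < u → u ≤ k → b i u = b j u := by
  refine (layoutKey_lt_iff.1 h).resolve_right fun ⟨heq, hlex⟩ => ?_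
  have hlex' : toLex (b j) < toLex (b i) :=
    ⟨k', fun u huk' => (heq u (hkk'.le_of_lt huk')).symm, hlt'⟩
  exact hlex.not_gt (Prod.Lex.toLex_lt_toLex.2 (.inl hlex'))

end LayoutKey

section Layout

variable {m n : ℕ} {b : Fin m → Fin n → ℕ} {L : Fin n → Equiv.Perm (Fin m)} {i j : Fin m}
  {k k' : Fin n} {p q : Fin n × Fin n}

theorem crossAt_comm : CrossAt L i j k ↔ CrossAt L j i k :=
  exists_congr fun _ => or_comm

theorem crossAt_of_covBy (hkk' : k ⋖ k') (h : L k i < L k j) (h' : L k' j < L k' i) :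
    CrossAt L i j k := by
  obtain ⟨k', hk'⟩ := k'
  obtain rfl : (k : ℕ) + 1 = k' := by simpa using hkk'
  exact ⟨hk', .inl ⟨h, h'⟩⟩

theorem exists_crossAt_of_lt_of_lt {s t : Fin n} (hst : s ≤ t) (hs : L s i < L s j)
    (ht : L t j < L t i) : ∃ k, s ≤ k ∧ k < t ∧ CrossAt L i j k := by
  have hij : j ≠ i := by rintro rfl; exact hs.false
  obtain ⟨k, k', hkk', hsk, hk't, hk, hk'⟩ :=
    exists_covBy_of_not (P := fun u => L u i < L u j) hst hs ht.not_gt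
  exact ⟨k, hsk, hkk'.lt.trans_le hk't,
    crossAt_of_covBy hkk' hk ((not_lt.1 hk').lt_of_ne ((L k').injective.ne hij))⟩

theorem altPair_comm : AltPair b i j p ↔ AltPair b j i p := by
  simp only [AltPair, eq_comm (a := b i _), or_comm]

theorem AltPair.exists_crossAt (hp : AltPair b i j p) (hL : Compatible b L) :
    ∃ k, p.1 ≤ k ∧ k < p.2 ∧ CrossAt L i j k := by
  obtain ⟨hlt, -, ⟨h₁, h₂⟩ | ⟨h₁, h₂⟩⟩ := hp
  · exact exists_crossAt_of_lt_of_lt hlt.le (hL _ _ _ h₁) (hL _ _ _ h₂)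
  · simp only [crossAt_comm (i := i)]
    exact exists_crossAt_of_lt_of_lt hlt.le (hL _ _ _ h₁) (hL _ _ _ h₂)

theorem AltPair.ne_fst (hp : AltPair b i j p) : b i p.1 ≠ b j p.1 :=
  hp.2.2.elim (fun h => h.1.ne) fun h => h.1.ne'

theorem AltPair.ne_snd (hp : AltPair b i j p) : b i p.2 ≠ b j p.2 :=
  hp.2.2.elim (fun h => h.2.ne') fun h => h.2.ne

theorem AltPair.fst_le_fst (hp : AltPair b i j p) (hq : AltPair b i j q) (h : p.1 < q.2) :
    p.1 ≤ q.1 :=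
  not_lt.1 fun hlt => hp.ne_fst (hq.2.1 _ hlt h)

theorem AltPair.snd_le_snd (hp : AltPair b i j p) (hq : AltPair b i j q) (h : p.1 < q.2) :
    p.2 ≤ q.2 :=
  not_lt.1 fun hlt => hq.ne_snd (hp.2.1 _ h hlt)

theorem AltPair.eq_of_overlap (hp : AltPair b i j p) (hq : AltPair b i j q)
    (hpq : p.1 < q.2) (hqp : q.1 < p.2) : p = q :=
  Prod.ext ((hp.fst_le_fst hq hpq).antisymm (hq.fst_le_fst hp hqp))
    ((hp.snd_le_snd hq hpq).antisymm (hq.snd_le_snd hp hqp))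

theorem altCount_le_crossCount (hL : Compatible b L) (i j : Fin m) :
    altCount b i j ≤ crossCount L i j := by
  refine card_le_card_of_forall_subsingleton (fun p k => p.1 ≤ k ∧ k < p.2) (fun p hp => ?_) ?_
  · obtain ⟨k, hpk, hkp, hk⟩ := (mem_filter_univ p).1 hp |>.exists_crossAt hL
    exact ⟨k, (mem_filter_univ k).2 hk, hpk, hkp⟩
  · rintro k - p ⟨hp, hpk, hkp⟩ q ⟨hq, hqk, hkq⟩
    exact ((mem_filter_univ p).1 hp).eq_of_overlap ((mem_filter_univ q).1 hq)
      (hpk.trans_lt hkq) (hqk.trans_lt hkp)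

/-- The pairwise crossing-minimal layout: at each element, curves are placed in the order of
`layoutKey`. `Tuple.sort` sends positions to curves, hence the inverse. -/
noncomputable def lexLayout (b : Fin m → Fin n → ℕ) (k : Fin n) : Equiv.Perm (Fin m) :=
  (Tuple.sort (layoutKey b k)).symm

theorem lexLayout_lt_iff :
    lexLayout b k i < lexLayout b k j ↔ layoutKey b k i < layoutKey b k j :=
  sort_symm_lt_sort_symm_iff (layoutKey_injective b k)

theorem compatible_lexLayout (b : Fin m → Fin n → ℕ) : Compatible b (lexLayout b) :=
  fun _ _ _ h => lexLayout_lt_iff.2 (layoutKey_lt_of_lt h)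

theorem lt_of_lexLayout_swap (hkk' : k ⋖ k') (h : lexLayout b k i < lexLayout b k j)
    (h' : lexLayout b k' j < lexLayout b k' i) : b j k' < b i k' :=
  lt_of_layoutKey_swap hkk' (lexLayout_lt_iff.1 h) (lexLayout_lt_iff.1 h')

theorem exists_altPair_of_lexLayout_swap (hkk' : k ⋖ k')
    (h : lexLayout b k i < lexLayout b k j) (h' : lexLayout b k' j < lexLayout b k' i) :
    ∃ t, AltPair b i j (t, k') := by
  have hlt' : b j k' < b i k' := lt_of_lexLayout_swap hkk' h h'
  obtain ⟨t, htk, hlt, heq⟩ := exists_last_lt_of_layoutKey_lt hkk' (lexLayout_lt_iff.1 h) hlt'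
  exact ⟨t, htk.trans_lt hkk'.lt, fun u htu huk' => heq u htu (hkk'.le_of_lt huk'),
    .inl ⟨hlt, hlt'⟩⟩

theorem exists_altPair_of_crossAt_lexLayout (hk : CrossAt (lexLayout b) i j k) :
    ∃ p, AltPair b i j p ∧ k ⋖ p.2 := by
  obtain ⟨hn, hswap⟩ := hk
  have hcov : k ⋖ ⟨k + 1, hn⟩ := by simp
  rcases hswap with ⟨h, h'⟩ | ⟨h, h'⟩
  · obtain ⟨t, ht⟩ := exists_altPair_of_lexLayout_swap hcov h h'
    exact ⟨_, ht, hcov⟩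
  · obtain ⟨t, ht⟩ := exists_altPair_of_lexLayout_swap hcov h h'
    exact ⟨_, altPair_comm.1 ht, hcov⟩

theorem crossCount_lexLayout_le_altCount (b : Fin m → Fin n → ℕ) (i j : Fin m) :
    crossCount (lexLayout b) i j ≤ altCount b i j := by
  refine card_le_card_of_forall_subsingleton (fun k p => k ⋖ p.2) (fun k hk => ?_) ?_
  · obtain ⟨p, hp, hkp⟩ := exists_altPair_of_crossAt_lexLayout ((mem_filter_univ k).1 hk)
    exact ⟨p, (mem_filter_univ p).2 hp, hkp⟩
  · rintro p - k ⟨-, hk⟩ k' ⟨-, hk'⟩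
    exact hk.unique_left hk'

theorem totalCross_lexLayout_le (hL : Compatible b L) : totalCross (lexLayout b) ≤ totalCross L :=
  sum_le_sum fun p _ =>
    (crossCount_lexLayout_le_altCount b p.1 p.2).trans (altCount_le_crossCount hL p.1 p.2)

theorem ne_and_le_and_lt_of_lexLayout_swap (hkk' : k ⋖ k')
    (h : lexLayout b k i < lexLayout b k j) (h' : lexLayout b k' j < lexLayout b k' i) :
    i ≠ j ∧ b i k ≤ b j k ∧ b j k' < b i k' :=
  ⟨by rintro rfl; exact h.false, not_lt.1 fun hlt => h.not_gt (compatible_lexLayout b _ _ _ hlt),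
    lt_of_lexLayout_swap hkk' h h'⟩

end Layout

theorem optimal_layout_gapwise_upper_bound {m n : ℕ} (hm : 0 < m) (hn : 0 < n)
    (b : Fin m → Fin n → ℕ) :
    ∃ L : Fin n → Equiv.Perm (Fin m), Compatible b L ∧
      (∀ L' : Fin n → Equiv.Perm (Fin m), Compatible b L' → totalCross L ≤ totalCross L') ∧
      ∀ (k : Fin n) (hk : (k : ℕ) + 1 < n),
        (univ.filter (fun p : Fin m × Fin m => p.1 < p.2 ∧
            ((L k p.1 < L k p.2 ∧ L ⟨(k : ℕ) + 1, hk⟩ p.2 < L ⟨(k : ℕ) + 1, hk⟩ p.1) ∨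
             (L k p.2 < L k p.1 ∧ L ⟨(k : ℕ) + 1, hk⟩ p.1 < L ⟨(k : ℕ) + 1, hk⟩ p.2)))).card ≤
        (univ.filter (fun p : Fin m × Fin m => p.1 ≠ p.2 ∧
            b p.1 k ≤ b p.2 k ∧ b p.2 ⟨(k : ℕ) + 1, hk⟩ < b p.1 ⟨(k : ℕ) + 1, hk⟩)).card := by
  refine ⟨lexLayout b, compatible_lexLayout b, fun _ => totalCross_lexLayout_le, fun k hk => ?_⟩
  have hcov : k ⋖ ⟨k + 1, hk⟩ := by simp
  refine card_filter_lt_and_le_card_filter fun p _ hcross => ?_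
  exact hcross.imp (fun ⟨h, h'⟩ => ne_and_le_and_lt_of_lexLayout_swap hcov h h')
    fun ⟨h, h'⟩ => ne_and_le_and_lt_of_lexLayout_swap hcov h h'
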